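/- Let u, w : ℝ³ → ℝ be smooth (C^∞) functions of the variables (t,x,y) and let λ ≠ 0 be a real constant. Suppose w satisfies the Lax system w_t = (u_x − λ)·w_x and w_y = λ⁻¹·u_y·w_x at every point, and suppose w_x is nowhere zero. Then u satisfies the 3D rdDym equation u_ty = u_x·u_xy − u_y·u_xx at every point. -/

import Mathlib

noncomputable section

/-- Partial derivative with respect to the first coordinate `t`. -/
def pt (u : ℝ × ℝ × ℝ → ℝ) : ℝ × ℝ × ℝ → ℝ :=
  fun p => deriv (fun s => u (s, p.2.1, p.2.2)) p.1

/-- Partial derivative with respect to the second coordinate `x`. -/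
def px (u : ℝ × ℝ × ℝ → ℝ) : ℝ × ℝ × ℝ → ℝ :=
  fun p => deriv (fun s => u (p.1, s, p.2.2)) p.2.1

/-- Partial derivative with respect to the third coordinate `y`. -/
def py (u : ℝ × ℝ × ℝ → ℝ) : ℝ × ℝ × ℝ → ℝ :=
  fun p => deriv (fun s => u (p.1, p.2.1, s)) p.2.2

/-- The 3D rdDym equation `u_ty = u_x·u_xy − u_y·u_xx`. -/
def rdDym (u : ℝ × ℝ × ℝ → ℝ) : Prop :=
  ∀ p, py (pt u) p = px u p * py (px u) p - py u p * px (px u) p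

/-- The linearization `ℓ(v) = v_ty − u_x·v_xy + u_y·v_xx − u_xy·v_x + u_xx·v_y = 0`
of the rdDym equation along `u`. -/
def linearized (u v : ℝ × ℝ × ℝ → ℝ) : Prop :=
  ∀ p, py (pt v) p - px u p * py (px v) p + py u p * px (px v) p
      - py (px u) p * px v p + px (px u) p * py v p = 0

section PartialDerivatives

variable {u : ℝ × ℝ × ℝ → ℝ}

theorem pt_eq_fderiv (hu : Differentiable ℝ u) : pt u = fun p => fderiv ℝ u p (1, 0, 0) := by
  funext p
  have hc : HasDerivAt (fun s : ℝ => (s, p.2.1, p.2.2)) (1, 0, 0) p.1 :=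
    (hasDerivAt_id p.1).prodMk ((hasDerivAt_const _ _).prodMk (hasDerivAt_const _ _))
  exact ((hu p).hasFDerivAt.comp_hasDerivAt p.1 hc).deriv

theorem px_eq_fderiv (hu : Differentiable ℝ u) : px u = fun p => fderiv ℝ u p (0, 1, 0) := by
  funext p
  have hc : HasDerivAt (fun s : ℝ => (p.1, s, p.2.2)) (0, 1, 0) p.2.1 :=
    (hasDerivAt_const _ _).prodMk ((hasDerivAt_id p.2.1).prodMk (hasDerivAt_const _ _))
  exact ((hu p).hasFDerivAt.comp_hasDerivAt p.2.1 hc).deriv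

theorem py_eq_fderiv (hu : Differentiable ℝ u) : py u = fun p => fderiv ℝ u p (0, 0, 1) := by
  funext p
  have hc : HasDerivAt (fun s : ℝ => (p.1, p.2.1, s)) (0, 0, 1) p.2.2 :=
    (hasDerivAt_const _ _).prodMk ((hasDerivAt_const _ _).prodMk (hasDerivAt_id p.2.2))
  exact ((hu p).hasFDerivAt.comp_hasDerivAt p.2.2 hc).deriv

end PartialDerivatives

section DirectionalDerivatives

variable {E : Type*} [NormedAddCommGroup E] [NormedSpace ℝ E] {f g : E → ℝ}

theorem ContDiff.differentiable_fderiv_apply_const (hf : ContDiff ℝ 2 f) (v : E) :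
    Differentiable ℝ (fun p => fderiv ℝ f p v) :=
  ((hf.fderiv_right (m := 1) (by norm_num)).differentiable (by norm_num)).clm_apply
    (differentiable_const v)

theorem ContDiff.fderiv_fderiv_apply_comm (hf : ContDiff ℝ 2 f) (v w p : E) :
    fderiv ℝ (fun q => fderiv ℝ f q v) p w = fderiv ℝ (fun q => fderiv ℝ f q w) p v := by
  have hd : DifferentiableAt ℝ (fderiv ℝ f) p :=
    (hf.fderiv_right (m := 1) (by norm_num)).differentiable (by norm_num) p
  have hs := hf.contDiffAt.isSymmSndFDerivAt (x := p) (by simp)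
  rw [fderiv_clm_apply hd (differentiableAt_const v), fderiv_clm_apply hd (differentiableAt_const w)]
  simpa using hs w v

theorem fderiv_fun_mul_apply {p : E} (hf : DifferentiableAt ℝ f p) (hg : DifferentiableAt ℝ g p)
    (v : E) : fderiv ℝ (fun q => f q * g q) p v
      = fderiv ℝ f p v * g p + f p * fderiv ℝ g p v := by
  rw [fderiv_fun_mul hf hg]
  simp
  ring

end DirectionalDerivatives

/-- If `w` satisfies the Lax system `w_t = (u_x − λ) w_x`,
`w_y = λ⁻¹ u_y w_x` with `λ ≠ 0` and `w_x` nowhere zero, then `u` satisfies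
the 3D rdDym equation. -/
theorem rdDym_of_lax (u w : ℝ × ℝ × ℝ → ℝ) (lam : ℝ)
    (hu : ContDiff ℝ (⊤ : ℕ∞) u) (hw : ContDiff ℝ (⊤ : ℕ∞) w) (hlam : lam ≠ 0)
    (hwt : ∀ p, pt w p = (px u p - lam) * px w p)
    (hwy : ∀ p, py w p = lam⁻¹ * py u p * px w p)
    (hwx : ∀ p, px w p ≠ 0) :
    rdDym u := by
  have hu2 : ContDiff ℝ 2 u := contDiff_infty.mp hu 2
  have hw2 : ContDiff ℝ 2 w := contDiff_infty.mp hw 2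
  have hud := hu2.differentiable_fderiv_apply_const
  have hwd := hw2.differentiable_fderiv_apply_const
  have hu1 : Differentiable ℝ u := hu2.differentiable (by norm_num)
  have hw1 : Differentiable ℝ w := hw2.differentiable (by norm_num)
  intro p
  rw [pt_eq_fderiv hu1, px_eq_fderiv hu1, py_eq_fderiv (hud _), py_eq_fderiv (hud _),
    px_eq_fderiv (hud _), py_eq_fderiv hu1]
  simp only [pt_eq_fderiv hw1, px_eq_fderiv hw1, py_eq_fderiv hw1, px_eq_fderiv hu1,
    py_eq_fderiv hu1] at hwt hwy hwx
  have fderiv_wt (v : ℝ × ℝ × ℝ) := congrArg (fun f => fderiv ℝ f p v) (funext hwt)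
  have fderiv_wy (v : ℝ × ℝ × ℝ) := congrArg (fun f => fderiv ℝ f p v) (funext hwy)
  simp only [fderiv_fun_mul_apply ((hud _ p).sub_const lam) (hwd _ p), fderiv_sub_const]
    at fderiv_wt
  simp only [fderiv_fun_mul_apply ((hud _ p).const_mul lam⁻¹) (hwd _ p),
    fderiv_const_mul (hud _ p), smul_apply, smul_eq_mul] at fderiv_wy
  have hwty := fderiv_wt (0, 0, 1)
  have hwtx := fderiv_wt (0, 1, 0)
  have hwyt := fderiv_wy (1, 0, 0)
  have hwyx := fderiv_wy (0, 1, 0)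
  rw [hw2.fderiv_fderiv_apply_comm (1, 0, 0) (0, 0, 1), hwyt,
    hw2.fderiv_fderiv_apply_comm (0, 1, 0) (1, 0, 0), hwtx,
    hw2.fderiv_fderiv_apply_comm (0, 1, 0) (0, 0, 1), hwyx,
    hu2.fderiv_fderiv_apply_comm (0, 0, 1) (1, 0, 0),
    hu2.fderiv_fderiv_apply_comm (0, 0, 1) (0, 1, 0)] at hwty
  apply mul_right_cancel₀ (hwx p)
  field_simp at hwty
  linear_combination hwty
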